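/- Let σ : ℰ → ℝ, q' : ℐ → ℝ with q'(x) ≠ 0 for all x ∈ ℐ, q'' : ℐ → ℝ, ω₁ ∈ ℝ with ω₁ ≠ 0, and q(ω₁) := q' + iω₁q''; suppose (L_σ)_ℐℐ + diag(q(ω₁)) is invertible. Let u₁ : 𝒱 → ℂ satisfy (L_σ u₁)_ℐ + q(ω₁) ⊙ (u₁)_ℐ = 0. Suppose δq'' : ℐ → ℝ and δu₁ : 𝒱 → ℂ satisfy (δu₁)_ℬ = 0 and (L_σ δu₁)_ℐ + iω₁δq'' ⊙ (u₁)_ℐ + q(ω₁) ⊙ (δu₁)_ℐ = 0. Then: (a) (δu₁)_ℐ = −iω₁ ((L_σ)_ℐℐ + diag(q(ω₁)))⁻¹ diag((u₁)_ℐ) δq''; and (b) if in addition q' ⊙ conj((u₁)_ℐ) ⊙ (δu₁)_ℐ + q' ⊙ (u₁)_ℐ ⊙ conj((δu₁)_ℐ) = 0, then Re(B) δq'' = 0, where B := −i diag(conj((u₁)_ℐ)) ((L_σ)_ℐℐ + diag(q(ω₁)))⁻¹ diag((u₁)_ℐ). -/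

import Mathlib

open Matrix

noncomputable section

variable {E B I : Type*} [Fintype E] [Fintype B] [Fintype I]
  [DecidableEq E] [DecidableEq B] [DecidableEq I]

/-- Discrete gradient of an oriented graph whose edge `e` goes from node `tail e`
to node `head e`, so that `(dGrad R head tail *ᵥ u) e = u (head e) - u (tail e)`.
The node set is `𝒱 = B ⊕ I`, with boundary nodes `B` and interior nodes `I`. -/
def dGrad (R : Type*) [Ring R] (head tail : E → B ⊕ I) : Matrix E (B ⊕ I) R :=
  Matrix.of fun e v => (if v = head e then 1 else 0) - (if v = tail e then 1 else 0)

/-- The weighted graph Laplacian `L_w = ∇ᵀ diag(w) ∇`. -/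
def dLap (R : Type*) [CommRing R] (head tail : E → B ⊕ I) (w : E → R) :
    Matrix (B ⊕ I) (B ⊕ I) R :=
  (dGrad R head tail)ᵀ * Matrix.diagonal w * dGrad R head tail

/-- The restriction matrix `R_ℐ` from vectors on `𝒱 = B ⊕ I` to vectors on `I`;
its transpose extends by zero. -/
def RImat (R : Type*) [Ring R] : Matrix I (B ⊕ I) R :=
  Matrix.of fun i v => if v = Sum.inr i then 1 else 0

/-!
The boundary values of the perturbation `δu` vanish, so the linearized equation lives on the
interior: `((L_σ)_ℐℐ + diag q) (δu)_ℐ = -iω (δq'' ⊙ u_ℐ)`. Inverting gives (a), and multiplying (a)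
by `conj u_ℐ` gives `ω B δq'' = conj u_ℐ ⊙ (δu)_ℐ`. The condition in (b) says that
`2 q' ⊙ Re (conj u_ℐ ⊙ (δu)_ℐ) = 0`, and `Re B δq''` is the real part of `B δq''` because `δq''`
is real.
-/

section

variable {m n R : Type*} [Fintype n]

theorem mulVec_eq_submatrix_inr_mulVec_of_comp_inl_eq_zero {l : Type*} [Fintype m]
    [NonUnitalNonAssocSemiring R] (M : Matrix l (m ⊕ n) R) {v : m ⊕ n → R}
    (hv : v ∘ Sum.inl = 0) :
    M *ᵥ v = M.submatrix id Sum.inr *ᵥ (v ∘ Sum.inr) := by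
  have hv_inl (j : m) : v (Sum.inl j) = 0 := congrFun hv j
  ext i
  simp [mulVec, dotProduct, Fintype.sum_sum_type, hv_inl]

theorem diagonal_mulVec_eq_mul [DecidableEq n] [NonUnitalNonAssocSemiring R] (v w : n → R) :
    diagonal v *ᵥ w = v * w :=
  funext (mulVec_diagonal v w)

theorem comp_inr_eq_of_linearized_eq [Fintype m] [DecidableEq n] [CommRing R]
    {L : Matrix (m ⊕ n) (m ⊕ n) R} {q u δq : n → R} {δu : m ⊕ n → R}
    (hinv : IsUnit (L.submatrix Sum.inr Sum.inr + diagonal q)) (hbd : δu ∘ Sum.inl = 0)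
    (hlin : (L *ᵥ δu) ∘ Sum.inr + δq * u + q * (δu ∘ Sum.inr) = 0) :
    δu ∘ Sum.inr = -((L.submatrix Sum.inr Sum.inr + diagonal q)⁻¹ * diagonal u) *ᵥ δq := by
  have := hinv.invertible
  have hL : (L *ᵥ δu) ∘ Sum.inr = L.submatrix Sum.inr Sum.inr *ᵥ (δu ∘ Sum.inr) :=
    congrArg (· ∘ Sum.inr) (mulVec_eq_submatrix_inr_mulVec_of_comp_inl_eq_zero L hbd)
  have hinterior : -(u * δq) =
      (L.submatrix Sum.inr Sum.inr + diagonal q) *ᵥ (δu ∘ Sum.inr) := by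
    rw [add_mulVec, diagonal_mulVec_eq_mul, ← hL]
    linear_combination -hlin
  rw [neg_mulVec, ← mulVec_mulVec, diagonal_mulVec_eq_mul, ← mulVec_neg,
    inv_mulVec_eq_vec hinterior]

theorem map_re_mulVec (M : Matrix m n ℂ) (v : n → ℝ) :
    M.map Complex.re *ᵥ v = fun i => ((M *ᵥ fun j => (v j : ℂ)) i).re := by
  ext i
  simp [mulVec, dotProduct]

theorem map_re_diagonal_mul_mulVec [Fintype m] [DecidableEq m] (d : m → ℂ) (M : Matrix m n ℂ)
    (v : n → ℝ) :
    (diagonal d * M).map Complex.re *ᵥ v =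
      fun i => (d i * (M *ᵥ fun j => (v j : ℂ)) i).re := by
  simp only [map_re_mulVec, ← mulVec_mulVec, mulVec_diagonal]

theorem map_re_diagonal_mul_mulVec_eq_zero [Fintype m] [DecidableEq m] {d x : m → ℂ}
    {M : Matrix m n ℂ} {v : n → ℝ} {ω : ℝ} (hω : ω ≠ 0)
    (hx : x = (ω : ℂ) • (M *ᵥ fun j => (v j : ℂ))) (hre : ∀ i, (d i * x i).re = 0) :
    (diagonal d * M).map Complex.re *ᵥ v = 0 := by
  rw [map_re_diagonal_mul_mulVec]
  ext i
  have hi := hre i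
  rw [hx, Pi.smul_apply, smul_eq_mul, mul_left_comm, Complex.re_ofReal_mul] at hi
  exact (mul_eq_zero.mp hi).resolve_left hω

end

theorem ofReal_mul_star_mul_add (a : ℝ) (z w : ℂ) :
    (a : ℂ) * star z * w + a * z * star w = ((a * (2 * (star z * w).re) : ℝ) : ℂ) := by
  rw [Complex.ofReal_mul, ← Complex.add_conj, starRingEnd_apply, star_mul', star_star]
  ring

theorem complex_schroedinger_linearization_identities_general {m n : Type*} [Fintype m]
    [Fintype n] [DecidableEq n] (L : Matrix (m ⊕ n) (m ⊕ n) ℂ) {w : n → ℝ} (hw : ∀ i, w i ≠ 0)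
    {ω : ℝ} (hω : ω ≠ 0) (q : n → ℂ)
    (hinv : IsUnit (L.submatrix Sum.inr Sum.inr + diagonal q))
    (u : n → ℂ) (δq : n → ℝ) {δu : m ⊕ n → ℂ} (hbd : δu ∘ Sum.inl = 0)
    (hlin : (L *ᵥ δu) ∘ Sum.inr + (fun i => (ω : ℂ) * δq i * Complex.I * u i) +
      q * (δu ∘ Sum.inr) = 0) :
    δu ∘ Sum.inr = ((-Complex.I * ω) •
        ((L.submatrix Sum.inr Sum.inr + diagonal q)⁻¹ * diagonal u)) *ᵥ (fun i => (δq i : ℂ)) ∧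
    ((∀ i, (w i : ℂ) * star (u i) * δu (Sum.inr i) +
        w i * u i * star (δu (Sum.inr i)) = 0) →
      ((-Complex.I) • (diagonal (star u) * (L.submatrix Sum.inr Sum.inr + diagonal q)⁻¹ *
        diagonal u)).map Complex.re *ᵥ δq = 0) := by
  have hcoeff : (fun i => (ω : ℂ) * δq i * Complex.I) =
      (Complex.I * ω) • fun i => (δq i : ℂ) := by
    ext i
    simp only [Pi.smul_apply, smul_eq_mul]
    ring
  have hδu : δu ∘ Sum.inr = ((-Complex.I * ω) •
      ((L.submatrix Sum.inr Sum.inr + diagonal q)⁻¹ * diagonal u)) *ᵥ fun i => (δq i : ℂ) := by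
    rw [comp_inr_eq_of_linearized_eq hinv hbd hlin, hcoeff, mulVec_smul, neg_mulVec, smul_mulVec,
      neg_mul, neg_smul, smul_neg]
  refine ⟨hδu, fun h => ?_⟩
  have hre (i : n) : (star (u i) * δu (Sum.inr i)).re = 0 := by
    simpa only [ofReal_mul_star_mul_add, Complex.ofReal_eq_zero, mul_eq_zero, two_ne_zero, hw i,
      false_or] using h i
  rw [Matrix.mul_assoc, ← Matrix.mul_smul]
  refine map_re_diagonal_mul_mulVec_eq_zero (x := δu ∘ Sum.inr) hω ?_ hre
  rw [hδu, mul_comm, mul_smul, smul_mulVec]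

/-- key identities in the proof of local uniqueness for the complex
Schrödinger problem: (a) the formula for `(δu₁)_ℐ` in terms of `δq''` and (b) the
equation `Re(B) δq'' = 0`. -/
theorem complex_schroedinger_linearization_identities
    (head tail : E → B ⊕ I) (hloop : ∀ e, head e ≠ tail e)
    (σ : E → ℝ)
    (q' : I → ℝ) (hq' : ∀ i, q' i ≠ 0) (q'' : I → ℝ) (ω₁ : ℝ) (hω₁ : ω₁ ≠ 0)
    (qc : I → ℂ) (hqc : qc = fun i => (q' i : ℂ) + (ω₁ : ℂ) * (q'' i : ℂ) * Complex.I)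
    (hinv : IsUnit ((dLap ℂ head tail (fun e => (σ e : ℂ))).submatrix Sum.inr Sum.inr +
      Matrix.diagonal qc))
    (u₁ : B ⊕ I → ℂ)
    (hu₁ : ((dLap ℂ head tail (fun e => (σ e : ℂ)) *ᵥ u₁) ∘ Sum.inr) +
      (fun i => qc i * u₁ (Sum.inr i)) = 0)
    (δq'' : I → ℝ) (δu₁ : B ⊕ I → ℂ)
    (hbd : δu₁ ∘ Sum.inl = 0)
    (hlin : ((dLap ℂ head tail (fun e => (σ e : ℂ)) *ᵥ δu₁) ∘ Sum.inr) +
      (fun i => (ω₁ : ℂ) * (δq'' i : ℂ) * Complex.I * u₁ (Sum.inr i)) +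
      (fun i => qc i * δu₁ (Sum.inr i)) = 0)
    (Bmat : Matrix I I ℂ)
    (hB : Bmat = (-Complex.I) •
      (Matrix.diagonal (fun i => starRingEnd ℂ (u₁ (Sum.inr i))) *
        ((dLap ℂ head tail (fun e => (σ e : ℂ))).submatrix Sum.inr Sum.inr +
          Matrix.diagonal qc)⁻¹ *
        Matrix.diagonal (fun i => u₁ (Sum.inr i)))) :
    δu₁ ∘ Sum.inr = ((-Complex.I * (ω₁ : ℂ)) •
        (((dLap ℂ head tail (fun e => (σ e : ℂ))).submatrix Sum.inr Sum.inr +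
            Matrix.diagonal qc)⁻¹ *
          Matrix.diagonal (fun i => u₁ (Sum.inr i)))) *ᵥ (fun i => (δq'' i : ℂ)) ∧
    ((∀ i, (q' i : ℂ) * starRingEnd ℂ (u₁ (Sum.inr i)) * δu₁ (Sum.inr i) +
        (q' i : ℂ) * u₁ (Sum.inr i) * starRingEnd ℂ (δu₁ (Sum.inr i)) = 0) →
      (Matrix.of fun i i' => (Bmat i i').re) *ᵥ δq'' = 0) := by
  subst hB
  exact complex_schroedinger_linearization_identities_general _ hq' hω₁ qc hinv _ δq'' hbd hlin
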